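/- Let σ be a valid layer ordering with respect to an MV assignment μ on a 1×n strip of stamps (n ≥ 2), and let μ' be the MV assignment on the 1×(n−1) strip that agrees with μ on every crease (i,i+1) with i < n−2. Then the permutation σ' of {0,…,n−2} obtained by removing face n−1 from σ (i.e., the unique permutation with σ'(i) < σ'(j) if and only if σ(i) < σ(j) for all i, j ≤ n−2) is a valid layer ordering with respect to μ'. -/

import Mathlib

/-- A crease direction: mountain or valley. -/
inductive MV : Type
  | M : MV
  | V : MV
deriving DecidableEq

/-- The value `σ(i)` of a layer ordering at face `i`, as a natural number
(`0` if `i` is out of range). -/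
def faceVal {n : ℕ} (σ : Equiv.Perm (Fin n)) (i : ℕ) : ℕ :=
  if h : i < n then (σ ⟨i, h⟩ : Fin n) else 0

/-- Condition (1): the layer ordering respects the mountain–valley assignment. -/
def MVRelations (n : ℕ) (μ : ℕ → MV) (σ : Equiv.Perm (Fin n)) : Prop :=
  ∀ i, i + 1 < n →
    if (μ i = MV.M ∧ Even i) ∨ (μ i = MV.V ∧ Odd i)
    then faceVal σ (i + 1) < faceVal σ i
    else faceVal σ i < faceVal σ (i + 1)

/-- `x` lies strictly between `lo` and `hi` (in either order). -/
def StrictlyBetween (x a b : ℕ) : Prop := min a b < x ∧ x < max a b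

/-- Condition (2): no two creases on the same side cross. -/
def NoCrossings (n : ℕ) (σ : Equiv.Perm (Fin n)) : Prop :=
  ∀ i j, i + 1 < n → j + 1 < n → i % 2 = j % 2 →
    ¬ Xor' (StrictlyBetween (faceVal σ j) (faceVal σ i) (faceVal σ (i + 1)))
           (StrictlyBetween (faceVal σ (j + 1)) (faceVal σ i) (faceVal σ (i + 1)))

/-- A valid layer ordering for the MV assignment `μ` on the `1 × n` strip. -/
def ValidLayerOrdering (n : ℕ) (μ : ℕ → MV) (σ : Equiv.Perm (Fin n)) : Prop :=
  MVRelations n μ σ ∧ NoCrossings n σ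

/-- `c(μ)`: the number of valid layer orderings for `μ` on the `1 × n` strip. -/
noncomputable def foldCount (n : ℕ) (μ : ℕ → MV) : ℕ :=
  Nat.card {σ : Equiv.Perm (Fin n) // ValidLayerOrdering n μ σ}

/-- Lemma: removing the last face of a valid layer ordering on `n` faces yields a
valid layer ordering on `n − 1` faces, for any assignment agreeing on the first
`n − 2` creases. -/
theorem stmt6 (n : ℕ) (hn : 2 ≤ n) (μ μ' : ℕ → MV)
    (hμ : ∀ i, i < n - 2 → μ' i = μ i)
    (σ : Equiv.Perm (Fin n)) (hσ : ValidLayerOrdering n μ σ)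
    (σ' : Equiv.Perm (Fin (n - 1)))
    (hσ' : ∀ i j : Fin (n - 1),
      σ' i < σ' j ↔ σ (Fin.castLE (Nat.sub_le n 1) i) < σ (Fin.castLE (Nat.sub_le n 1) j)) :
    ValidLayerOrdering (n - 1) μ' σ' := by
  have key : ∀ i j, i < n - 1 → j < n - 1 →
      (faceVal σ' i < faceVal σ' j ↔ faceVal σ i < faceVal σ j) := by
    intro i j hi hj
    have h := hσ' ⟨i, hi⟩ ⟨j, hj⟩
    have hi' : i < n := by omega
    have hj' : j < n := by omega
    simpa only [faceVal, hi, hj, hi', hj', dif_pos, Fin.lt_def, Fin.castLE_mk] using h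
  obtain ⟨h1, h2⟩ := hσ
  refine ⟨?_, ?_⟩
  · intro i hi
    have h := h1 i (by omega)
    rw [hμ i (by omega), key (i + 1) i (by omega) (by omega),
      key i (i + 1) (by omega) (by omega)]
    exact h
  · intro i j hi hj hij
    have h := h2 i j (by omega) (by omega) hij
    simp only [StrictlyBetween, min_lt_iff, lt_max_iff] at h ⊢
    rw [key i j (by omega) (by omega), key (i + 1) j (by omega) (by omega),
      key j i (by omega) (by omega), key j (i + 1) (by omega) (by omega),
      key i (j + 1) (by omega) (by omega), key (i + 1) (j + 1) (by omega) (by omega),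
      key (j + 1) i (by omega) (by omega), key (j + 1) (i + 1) (by omega) (by omega)]
    exact h
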